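/- Let q be an odd prime power, n ≥ 2 an even integer, and h ∈ GL_n(F_q) skew-symmetric (hᵗ = −h). Let S(h) = {ḡ ∈ PGL_n(F_q) : g·h·gᵗ = α·h for some α ∈ F_q^×} (this is the group PGSp_n(F_q)). Then the induced character Ind_{S(h)}^{PGL_n(F_q)}(1) is multiplicity-free: for every irreducible complex character χ of PGL_n(F_q), ⟨χ, Ind_{S(h)}^{PGL_n(F_q)}(1)⟩ ≤ 1. -/

import Mathlib

open Matrix
/-- The subgroup of nonzero scalar matrices in `GL (Fin n) F`, i.e. `Z ≅ F^×`. -/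
def scalarSub (n : ℕ) (F : Type) [Field F] : Subgroup (GL (Fin n) F) :=
  (Units.map (Matrix.scalar (Fin n)).toMonoidHom).range

instance scalarSub_normal (n : ℕ) (F : Type) [Field F] : (scalarSub n F).Normal := by
  constructor
  rintro x ⟨c, rfl⟩ g
  refine ⟨c, Units.ext ?_⟩
  have hc : (Matrix.scalar (Fin n) (c : F)) * (↑g : Matrix (Fin n) (Fin n) F)
      = (↑g : Matrix (Fin n) (Fin n) F) * Matrix.scalar (Fin n) (c : F) :=
    Matrix.scalar_commute (c : F) (fun r => mul_comm _ r) _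
  simp only [Units.coe_map, RingHom.toMonoidHom_eq_coe, MonoidHom.coe_coe, Units.val_mul]
  rw [← hc, mul_assoc, ← Units.val_mul, mul_inv_cancel, Units.val_one, mul_one]

/-- The projective general linear group `PGL_n(F) = GL_n(F)/Z`. -/
abbrev PGL (n : ℕ) (F : Type) [Field F] : Type :=
  GL (Fin n) F ⧸ scalarSub n F

/-- The canonical projection `GL_n(F) → PGL_n(F)`. -/
def pgl (n : ℕ) (F : Type) [Field F] : GL (Fin n) F →* PGL n F :=
  QuotientGroup.mk' (scalarSub n F)

lemma GL_inv_mul_coe {n : ℕ} {F : Type} [Field F] (a : GL (Fin n) F) :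
    ((a⁻¹ : GL (Fin n) F) : Matrix (Fin n) (Fin n) F) *
      ((a : GL (Fin n) F) : Matrix (Fin n) (Fin n) F) = 1 := by
  have := congrArg (Units.val) (inv_mul_cancel a)
  rwa [Units.val_mul, Units.val_one] at this

lemma GL_transpose_mul_transpose {n : ℕ} {F : Type} [Field F] (a : GL (Fin n) F) :
    ((a : GL (Fin n) F) : Matrix (Fin n) (Fin n) F)ᵀ *
      ((a⁻¹ : GL (Fin n) F) : Matrix (Fin n) (Fin n) F)ᵀ = 1 := by
  rw [← transpose_mul, GL_inv_mul_coe, transpose_one]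

/-- The similitude group of the bilinear form `h`:
`{g ∈ GL_n(F) : g·h·gᵗ = α·h for some α ∈ F^×}`. -/
def Sim {n : ℕ} {F : Type} [Field F] (h : Matrix (Fin n) (Fin n) F) :
    Subgroup (GL (Fin n) F) where
  carrier := {g | ∃ α : Fˣ,
    (↑g : Matrix (Fin n) (Fin n) F) * h * (↑g : Matrix (Fin n) (Fin n) F)ᵀ = (α : F) • h}
  one_mem' := ⟨1, by simp⟩
  mul_mem' := by
    rintro a b ⟨α, ha⟩ ⟨β, hb⟩
    refine ⟨β * α, ?_⟩
    show (↑(a * b) : Matrix (Fin n) (Fin n) F) * h * (↑(a * b) : Matrix (Fin n) (Fin n) F)ᵀ = _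
    rw [Units.val_mul, transpose_mul]
    calc (↑a : Matrix (Fin n) (Fin n) F) * ↑b * h *
          ((↑b : Matrix (Fin n) (Fin n) F)ᵀ * (↑a : Matrix (Fin n) (Fin n) F)ᵀ)
        = ↑a * ((↑b : Matrix (Fin n) (Fin n) F) * h * (↑b : Matrix (Fin n) (Fin n) F)ᵀ) *
          (↑a : Matrix (Fin n) (Fin n) F)ᵀ := by
          simp only [mul_assoc]
      _ = (β : F) • ((↑a : Matrix (Fin n) (Fin n) F) * h * (↑a : Matrix (Fin n) (Fin n) F)ᵀ) := by
          rw [hb, mul_smul_comm, smul_mul_assoc]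
      _ = (β : F) • ((α : F) • h) := by rw [ha]
      _ = ((β * α : Fˣ) : F) • h := by rw [smul_smul, Units.val_mul]
  inv_mem' := by
    rintro a ⟨α, ha⟩
    refine ⟨α⁻¹, ?_⟩
    show (↑(a⁻¹) : Matrix (Fin n) (Fin n) F) * h * (↑(a⁻¹) : Matrix (Fin n) (Fin n) F)ᵀ = _
    have key : (α : F) • ((↑(a⁻¹) : Matrix (Fin n) (Fin n) F) * h *
        (↑(a⁻¹) : Matrix (Fin n) (Fin n) F)ᵀ) = h := by
      calc (α : F) • ((↑(a⁻¹) : Matrix (Fin n) (Fin n) F) * h *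
            (↑(a⁻¹) : Matrix (Fin n) (Fin n) F)ᵀ)
          = (↑(a⁻¹) : Matrix (Fin n) (Fin n) F) * ((α : F) • h) *
            (↑(a⁻¹) : Matrix (Fin n) (Fin n) F)ᵀ := by
            rw [mul_smul_comm, smul_mul_assoc]
        _ = (↑(a⁻¹) : Matrix (Fin n) (Fin n) F) *
            ((↑a : Matrix (Fin n) (Fin n) F) * h * (↑a : Matrix (Fin n) (Fin n) F)ᵀ) *
            (↑(a⁻¹) : Matrix (Fin n) (Fin n) F)ᵀ := by rw [ha]
        _ = ((↑(a⁻¹) : Matrix (Fin n) (Fin n) F) * ↑a) * h *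
            ((↑a : Matrix (Fin n) (Fin n) F)ᵀ * (↑(a⁻¹) : Matrix (Fin n) (Fin n) F)ᵀ) := by
            simp only [mul_assoc]
        _ = h := by rw [GL_inv_mul_coe, GL_transpose_mul_transpose, one_mul, mul_one]
    calc (↑(a⁻¹) : Matrix (Fin n) (Fin n) F) * h * (↑(a⁻¹) : Matrix (Fin n) (Fin n) F)ᵀ
        = ((α : F))⁻¹ • ((α : F) • ((↑(a⁻¹) : Matrix (Fin n) (Fin n) F) * h *
          (↑(a⁻¹) : Matrix (Fin n) (Fin n) F)ᵀ)) := by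
          rw [smul_smul, inv_mul_cancel₀ (Units.ne_zero α), one_smul]
      _ = ((α⁻¹ : Fˣ) : F) • h := by rw [key, Units.val_inv_eq_inv_val]

/-- The subgroup of similitudes whose factor is a square:
`{g ∈ GL_n(F) : g·h·gᵗ = β²·h for some β ∈ F^×}`. -/
def Sim0 {n : ℕ} {F : Type} [Field F] (h : Matrix (Fin n) (Fin n) F) :
    Subgroup (GL (Fin n) F) where
  carrier := {g | ∃ β : Fˣ,
    (↑g : Matrix (Fin n) (Fin n) F) * h * (↑g : Matrix (Fin n) (Fin n) F)ᵀ = ((β : F))^2 • h}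
  one_mem' := ⟨1, by simp⟩
  mul_mem' := by
    rintro a b ⟨α, ha⟩ ⟨β, hb⟩
    refine ⟨β * α, ?_⟩
    show (↑(a * b) : Matrix (Fin n) (Fin n) F) * h * (↑(a * b) : Matrix (Fin n) (Fin n) F)ᵀ = _
    rw [Units.val_mul, transpose_mul]
    calc (↑a : Matrix (Fin n) (Fin n) F) * ↑b * h *
          ((↑b : Matrix (Fin n) (Fin n) F)ᵀ * (↑a : Matrix (Fin n) (Fin n) F)ᵀ)
        = ↑a * ((↑b : Matrix (Fin n) (Fin n) F) * h * (↑b : Matrix (Fin n) (Fin n) F)ᵀ) *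
          (↑a : Matrix (Fin n) (Fin n) F)ᵀ := by
          simp only [mul_assoc]
      _ = ((β : F))^2 • ((↑a : Matrix (Fin n) (Fin n) F) * h *
          (↑a : Matrix (Fin n) (Fin n) F)ᵀ) := by
          rw [hb, mul_smul_comm, smul_mul_assoc]
      _ = ((β : F))^2 • (((α : F))^2 • h) := by rw [ha]
      _ = ((↑(β * α) : F))^2 • h := by rw [smul_smul, Units.val_mul, mul_pow]
  inv_mem' := by
    rintro a ⟨α, ha⟩
    refine ⟨α⁻¹, ?_⟩
    show (↑(a⁻¹) : Matrix (Fin n) (Fin n) F) * h * (↑(a⁻¹) : Matrix (Fin n) (Fin n) F)ᵀ = _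
    have key : ((α : F))^2 • ((↑(a⁻¹) : Matrix (Fin n) (Fin n) F) * h *
        (↑(a⁻¹) : Matrix (Fin n) (Fin n) F)ᵀ) = h := by
      calc ((α : F))^2 • ((↑(a⁻¹) : Matrix (Fin n) (Fin n) F) * h *
            (↑(a⁻¹) : Matrix (Fin n) (Fin n) F)ᵀ)
          = (↑(a⁻¹) : Matrix (Fin n) (Fin n) F) * (((α : F))^2 • h) *
            (↑(a⁻¹) : Matrix (Fin n) (Fin n) F)ᵀ := by
            rw [mul_smul_comm, smul_mul_assoc]
        _ = (↑(a⁻¹) : Matrix (Fin n) (Fin n) F) *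
            ((↑a : Matrix (Fin n) (Fin n) F) * h * (↑a : Matrix (Fin n) (Fin n) F)ᵀ) *
            (↑(a⁻¹) : Matrix (Fin n) (Fin n) F)ᵀ := by rw [ha]
        _ = ((↑(a⁻¹) : Matrix (Fin n) (Fin n) F) * ↑a) * h *
            ((↑a : Matrix (Fin n) (Fin n) F)ᵀ * (↑(a⁻¹) : Matrix (Fin n) (Fin n) F)ᵀ) := by
            simp only [mul_assoc]
        _ = h := by rw [GL_inv_mul_coe, GL_transpose_mul_transpose, one_mul, mul_one]
    calc (↑(a⁻¹) : Matrix (Fin n) (Fin n) F) * h * (↑(a⁻¹) : Matrix (Fin n) (Fin n) F)ᵀ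
        = (((α : F))^2)⁻¹ • (((α : F))^2 • ((↑(a⁻¹) : Matrix (Fin n) (Fin n) F) * h *
          (↑(a⁻¹) : Matrix (Fin n) (Fin n) F)ᵀ)) := by
          rw [smul_smul, inv_mul_cancel₀ (pow_ne_zero 2 (Units.ne_zero α)), one_smul]
      _ = ((↑(α⁻¹) : F))^2 • h := by
          rw [key, Units.val_inv_eq_inv_val, inv_pow]

/-- The isometry group of the bilinear form `h`: `{g ∈ GL_n(F) : g·h·gᵗ = h}`. -/
def Isom {n : ℕ} {F : Type} [Field F] (h : Matrix (Fin n) (Fin n) F) :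
    Subgroup (GL (Fin n) F) where
  carrier := {g | (↑g : Matrix (Fin n) (Fin n) F) * h * (↑g : Matrix (Fin n) (Fin n) F)ᵀ = h}
  one_mem' := by simp
  mul_mem' := by
    intro a b ha hb
    show (↑(a * b) : Matrix (Fin n) (Fin n) F) * h * (↑(a * b) : Matrix (Fin n) (Fin n) F)ᵀ = h
    rw [Units.val_mul, transpose_mul]
    calc (↑a : Matrix (Fin n) (Fin n) F) * ↑b * h *
          ((↑b : Matrix (Fin n) (Fin n) F)ᵀ * (↑a : Matrix (Fin n) (Fin n) F)ᵀ)
        = ↑a * ((↑b : Matrix (Fin n) (Fin n) F) * h * (↑b : Matrix (Fin n) (Fin n) F)ᵀ) *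
          (↑a : Matrix (Fin n) (Fin n) F)ᵀ := by simp only [mul_assoc]
      _ = h := by rw [hb, ha]
  inv_mem' := by
    intro a ha
    show (↑(a⁻¹) : Matrix (Fin n) (Fin n) F) * h * (↑(a⁻¹) : Matrix (Fin n) (Fin n) F)ᵀ = h
    replace ha : (↑a : Matrix (Fin n) (Fin n) F) * h * (↑a : Matrix (Fin n) (Fin n) F)ᵀ = h := ha
    conv_lhs => rw [← ha]
    calc (↑(a⁻¹) : Matrix (Fin n) (Fin n) F) *
          ((↑a : Matrix (Fin n) (Fin n) F) * h * (↑a : Matrix (Fin n) (Fin n) F)ᵀ) *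
          (↑(a⁻¹) : Matrix (Fin n) (Fin n) F)ᵀ
        = ((↑(a⁻¹) : Matrix (Fin n) (Fin n) F) * ↑a) * h *
          ((↑a : Matrix (Fin n) (Fin n) F)ᵀ * (↑(a⁻¹) : Matrix (Fin n) (Fin n) F)ᵀ) := by
          simp only [mul_assoc]
      _ = h := by rw [GL_inv_mul_coe, GL_transpose_mul_transpose, one_mul, mul_one]

open scoped Classical in
/-- The induced class function `(Ind_H^G φ)(x) = (1/|H|) ∑_{y ∈ G, y⁻¹xy ∈ H} φ(y⁻¹xy)`. -/
noncomputable def ind {G : Type*} [Group G] [Fintype G] (H : Subgroup G) (φ : G → ℂ) :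
    G → ℂ :=
  fun x => (Nat.card H : ℂ)⁻¹ * ∑ y : G, if y⁻¹ * x * y ∈ H then φ (y⁻¹ * x * y) else 0

/-- The inner product `⟨φ,ψ⟩ = (1/|G|) ∑_{x ∈ G} φ(x) conj(ψ(x))` of complex functions. -/
noncomputable def innerProd {G : Type*} [Group G] [Fintype G] (φ ψ : G → ℂ) : ℂ :=
  (Nat.card G : ℂ)⁻¹ * ∑ x : G, φ x * (starRingEnd ℂ) (ψ x)

noncomputable instance (n : ℕ) (F : Type) [Field F] [Fintype F] :
    Fintype (GL (Fin n) F) := Fintype.ofFinite _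

noncomputable instance (n : ℕ) (F : Type) [Field F] [Fintype F] :
    Fintype (PGL n F) := Fintype.ofFinite _

/-!
Let `τ g = h gᵗ h⁻¹`, an anti-automorphism of `GL_n(F)` with `g τ(g) = 1` exactly when `g` is an
isometry of `h`. By Gelfand's trick the isometry group `H` has at most a line of invariants in every
irreducible representation as soon as `τ g ∈ H g H` for all `g`.

If `z` commutes with `X = g τ(g)` and `z τ(z) = X`, then `g⁻¹ z` and `τ(g) z⁻¹` lie in `H`, so
that `τ g ∈ H g H`. Such a square root of `X = (g h gᵗ) h⁻¹` exists because `g h gᵗ` is alternating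
along with `h`: the space is then a sum of two totally isotropic subspaces stable under (the
transpose of) `X`, and `z` can be taken to be `1` on the first one and `X` on the second one. The
two subspaces are built from pairs of cyclic submodules in duality, each generated in the
`p`-primary part of `X` for an irreducible factor `p` of its minimal polynomial.
-/

section SelfAdjoint

open Polynomial

variable {R V : Type*} [CommRing R] [AddCommGroup V] [Module R V]
  {f : LinearMap.BilinForm R V} {X : Module.End R V}

lemma isSelfAdjoint_of_isAlt_comp (hf : f.IsAlt) (hX : (f ∘ₗ X).IsAlt) : f.IsSelfAdjoint X :=
  fun u v ↦ (hX.neg v u).symm.trans (hf.neg_eq (X v) u)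

lemma isSelfAdjoint_aeval (hX : f.IsSelfAdjoint X) (a : R[X]) : f.IsSelfAdjoint (aeval X a) := by
  induction a using Polynomial.induction_on' with
  | add a b ha hb => intro u v; simpa using congr_arg₂ (· + ·) (ha u v) (hb u v)
  | monomial m c =>
    have hpow : ∀ u v, f ((X ^ m) u) v = f u ((X ^ m) v) := by
      induction m with
      | zero => simp
      | succ m ih =>
        intro u v
        rw [pow_succ, Module.End.mul_apply, ih, hX, ← Module.End.mul_apply, ← pow_succ', pow_succ]
    intro u v
    simp [aeval_monomial, Module.algebraMap_end_apply, hpow]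

/- In characteristic two this does not follow from self-adjointness: `f (Xᵐ x) x` is moved to
`f (Xⁱ x) (Xⁱ x)` or to `f (X (Xⁱ x)) (Xⁱ x)` according to the parity of `m`. -/
lemma isAlt_comp_aeval (hf : f.IsAlt) (hX : (f ∘ₗ X).IsAlt) (a : R[X]) :
    (f ∘ₗ aeval X a).IsAlt := by
  have hpow : ∀ i, f.IsSelfAdjoint ⇑(X ^ i) := fun i ↦ by
    simpa using isSelfAdjoint_aeval (isSelfAdjoint_of_isAlt_comp hf hX) (Polynomial.X ^ i)
  intro x
  induction a using Polynomial.induction_on' with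
  | add a b ha hb => simpa using congr_arg₂ (· + ·) ha hb
  | monomial m c =>
    suffices f ((X ^ m) x) x = 0 by simp [aeval_monomial, Module.algebraMap_end_apply, this]
    obtain ⟨i, rfl | rfl⟩ := m.even_or_odd'
    · rw [two_mul, pow_add, Module.End.mul_apply, hpow, hf]
    · rw [two_mul, add_assoc, pow_add, Module.End.mul_apply, hpow, pow_succ',
        Module.End.mul_apply]
      exact hX _

/-- The cyclic submodule `R[X] u` generated by a vector `u` under an endomorphism `X`. -/
noncomputable def cyclicSubmodule (X : Module.End R V) (u : V) : Submodule R V :=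
  LinearMap.range (LinearMap.applyₗ (R := R) u ∘ₗ (aeval X).toLinearMap)

lemma mem_cyclicSubmodule {u x : V} : x ∈ cyclicSubmodule X u ↔ ∃ a : R[X], aeval X a u = x := by
  simp [cyclicSubmodule]

lemma aeval_apply_mem_cyclicSubmodule (a : R[X]) (u : V) :
    aeval X a u ∈ cyclicSubmodule X u :=
  mem_cyclicSubmodule.2 ⟨a, rfl⟩

lemma self_mem_cyclicSubmodule (u : V) : u ∈ cyclicSubmodule X u :=
  mem_cyclicSubmodule.2 ⟨1, by simp⟩

lemma cyclicSubmodule_mem_invtSubmodule (u : V) : cyclicSubmodule X u ∈ X.invtSubmodule := by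
  rw [Module.End.mem_invtSubmodule_iff_forall_mem_of_mem]
  intro x hx
  obtain ⟨a, rfl⟩ := mem_cyclicSubmodule.1 hx
  exact mem_cyclicSubmodule.2 ⟨Polynomial.X * a, by simp⟩

lemma cyclicSubmodule_le_orthogonal_self (hf : f.IsAlt) (hX : (f ∘ₗ X).IsAlt) (u : V) :
    cyclicSubmodule X u ≤ f.orthogonal (cyclicSubmodule X u) := by
  intro x hx y hy
  obtain ⟨a, rfl⟩ := mem_cyclicSubmodule.1 hx
  obtain ⟨b, rfl⟩ := mem_cyclicSubmodule.1 hy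
  rw [← isSelfAdjoint_aeval (isSelfAdjoint_of_isAlt_comp hf hX) a, ← Module.End.mul_apply,
    ← map_mul]
  exact isAlt_comp_aeval hf hX (a * b) u

lemma orthogonal_mem_invtSubmodule (hX : f.IsSelfAdjoint X) {U : Submodule R V}
    (hU : U ∈ X.invtSubmodule) : f.orthogonal U ∈ X.invtSubmodule :=
  fun x hx y hy ↦ (hX y x).symm.trans (hx _ (hU hy))

lemma sup_le_orthogonal_sup (hf : f.IsRefl) {A B : Submodule R V} (hA : A ≤ f.orthogonal A)
    (hB : B ≤ f.orthogonal B) (hAB : A ≤ f.orthogonal B) : A ⊔ B ≤ f.orthogonal (A ⊔ B) := by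
  have hBA : B ≤ f.orthogonal A :=
    (LinearMap.BilinForm.le_orthogonal_orthogonal hf).trans
      (LinearMap.BilinForm.orthogonal_le hAB)
  have mem_of_mem {C : Submodule R V} (hCA : C ≤ f.orthogonal A) (hCB : C ≤ f.orthogonal B) :
      C ≤ f.orthogonal (A ⊔ B) := fun x hx y hy ↦ by
    obtain ⟨a, ha, b, hb, rfl⟩ := Submodule.mem_sup.1 hy
    rw [map_add, LinearMap.add_apply, hCA hx a ha, hCB hx b hb, add_zero]
  exact sup_le (mem_of_mem hA hAB) (mem_of_mem hBA hB)

lemma map_subtype_le_orthogonal {N : Submodule R V} {W : Submodule R N}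
    (hW : W ≤ (f.restrict N).orthogonal W) :
    W.map N.subtype ≤ f.orthogonal (W.map N.subtype) := by
  rintro _ ⟨x, hx, rfl⟩ _ ⟨y, hy, rfl⟩
  exact hW hx y hy

lemma disjoint_sup_orthogonal_sup {A B : Submodule R V}
    (hA : A ≤ f.orthogonal A) (hB : B ≤ f.orthogonal B) (hAB : Disjoint A (f.orthogonal B))
    (hBA : Disjoint B (f.orthogonal A)) : Disjoint (A ⊔ B) (f.orthogonal (A ⊔ B)) := by
  rw [Submodule.disjoint_def]
  intro x hx hx'
  obtain ⟨a, ha, b, hb, rfl⟩ := Submodule.mem_sup.1 hx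
  have ha0 : a = 0 := Submodule.disjoint_def.1 hAB a ha fun b' hb' ↦ by
    simpa [hB hb b' hb'] using hx' b' (Submodule.mem_sup_right hb')
  have hb0 : b = 0 := Submodule.disjoint_def.1 hBA b hb fun a' ha' ↦ by
    simpa [hA ha a' ha'] using hx' a' (Submodule.mem_sup_left ha')
  rw [ha0, hb0, add_zero]

lemma disjoint_of_le_orthogonal (hnd : f.Nondegenerate) {A B : Submodule R V}
    (hA : A ≤ f.orthogonal A) (hB : B ≤ f.orthogonal B) (hAB : Codisjoint A B) :
    Disjoint A B := by
  rw [Submodule.disjoint_def]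
  refine fun x hxA hxB ↦ hnd.2 x fun y ↦ ?_
  obtain ⟨a, ha, b, hb, rfl⟩ := Submodule.mem_sup.1 (hAB.eq_top ▸ Submodule.mem_top (x := y))
  rw [map_add, LinearMap.add_apply, hA hxA a ha, hB hxB b hb, add_zero]

/-- `W` and `W'` form a polarization of `(V, f)`, that is, they are complementary and totally
isotropic, and both are stable under the endomorphism `X`. -/
structure IsInvariantPolarization (f : LinearMap.BilinForm R V) (X : Module.End R V)
    (W W' : Submodule R V) : Prop where
  left_invariant : W ∈ X.invtSubmodule
  right_invariant : W' ∈ X.invtSubmodule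
  left_isotropic : W ≤ f.orthogonal W
  right_isotropic : W' ≤ f.orthogonal W'
  isCompl : IsCompl W W'

lemma IsInvariantPolarization.sup_map_subtype {A B : Submodule R V} (hf : f.IsRefl)
    (hnd : f.Nondegenerate) (hAX : A ∈ X.invtSubmodule) (hBX : B ∈ X.invtSubmodule)
    (hA : A ≤ f.orthogonal A) (hB : B ≤ f.orthogonal B)
    (hAB : Codisjoint (A ⊔ B) (f.orthogonal (A ⊔ B)))
    (hN : f.orthogonal (A ⊔ B) ∈ X.invtSubmodule) {W W' : Submodule R (f.orthogonal (A ⊔ B))}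
    (h : IsInvariantPolarization (f.restrict _) (X.restrict hN) W W') :
    IsInvariantPolarization f X (A ⊔ W.map (Submodule.subtype _))
      (B ⊔ W'.map (Submodule.subtype _)) := by
  have extend_isotropic {C : Submodule R V} (hCU : C ≤ A ⊔ B) (hC : C ≤ f.orthogonal C)
      {W : Submodule R (f.orthogonal (A ⊔ B))} (hW : W ≤ (f.restrict _).orthogonal W) :
      C ⊔ W.map (Submodule.subtype _) ≤ f.orthogonal (C ⊔ W.map (Submodule.subtype _)) :=
    sup_le_orthogonal_sup hf hC (map_subtype_le_orthogonal hW) <|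
      (hCU.trans (LinearMap.BilinForm.le_orthogonal_orthogonal hf)).trans
        (LinearMap.BilinForm.orthogonal_le (Submodule.map_subtype_le _ W))
  have hleft := extend_isotropic le_sup_left hA h.left_isotropic
  have hright := extend_isotropic le_sup_right hB h.right_isotropic
  have hcod : Codisjoint (A ⊔ W.map (Submodule.subtype _)) (B ⊔ W'.map (Submodule.subtype _)) := by
    rw [codisjoint_iff, sup_sup_sup_comm, ← Submodule.map_sup, h.isCompl.sup_eq_top,
      Submodule.map_top, Submodule.range_subtype, hAB.eq_top]
  exact
    { left_invariant := Module.End.invtSubmodule.sup_mem hAX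
        (Module.End.invtSubmodule.map_subtype_mem_of_mem_invtSubmodule X hN h.left_invariant)
      right_invariant := Module.End.invtSubmodule.sup_mem hBX
        (Module.End.invtSubmodule.map_subtype_mem_of_mem_invtSubmodule X hN h.right_invariant)
      left_isotropic := hleft
      right_isotropic := hright
      isCompl := ⟨disjoint_of_le_orthogonal hnd hleft hright hcod, hcod⟩ }

end SelfAdjoint

section HyperbolicDecomposition

open Polynomial

lemma exists_mul_add_mul_eq_pow {R : Type*} [CommRing R] [IsDomain R] [IsPrincipalIdealRing R]
    {p a : R} (hp : Irreducible p) {k : ℕ} (ha : ¬ p ^ (k + 1) ∣ a) :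
    ∃ b c, b * a + c * p ^ (k + 1) = p ^ k := by
  obtain ⟨d, hd⟩ := (IsPrincipalIdealRing.principal (Ideal.span {a, p ^ (k + 1)})).principal
  have dvd_of_mem {x : R} (hx : x ∈ Ideal.span {a, p ^ (k + 1)}) : d ∣ x := by
    rwa [hd, Ideal.submodule_span_eq, Ideal.mem_span_singleton] at hx
  obtain ⟨i, hi, hdi⟩ := (dvd_prime_pow hp.prime _).1
    (dvd_of_mem (Ideal.subset_span (Set.mem_insert_of_mem _ rfl)))
  have hik : i ≤ k := by
    by_contra! hlt
    obtain rfl : i = k + 1 := by omega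
    exact ha (hdi.symm.dvd.trans (dvd_of_mem (Ideal.subset_span (Set.mem_insert _ _))))
  refine Ideal.mem_span_pair.1 ?_
  rw [hd, Ideal.submodule_span_eq, Ideal.mem_span_singleton]
  exact hdi.dvd.trans (pow_dvd_pow p hik)

variable {F V : Type*} [Field F] [AddCommGroup V] [Module F V]
  {f : LinearMap.BilinForm F V} {X : Module.End F V}

/- Every nonzero vector of `F[X] u` has a multiple equal to the socle generator `pᵏ(X) u`, so
nothing but `f v (pᵏ(X) u) ≠ 0` is needed for `F[X] v` to separate the points of `F[X] u`. -/
lemma disjoint_cyclicSubmodule_orthogonal (hX : f.IsSelfAdjoint X) {p : F[X]} (hp : Irreducible p)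
    {k : ℕ} {u v : V} (hu : aeval X (p ^ (k + 1)) u = 0) (huv : f v (aeval X (p ^ k) u) ≠ 0) :
    Disjoint (cyclicSubmodule X u) (f.orthogonal (cyclicSubmodule X v)) := by
  rw [Submodule.disjoint_def]
  intro x hx hxv
  obtain ⟨a, rfl⟩ := mem_cyclicSubmodule.1 hx
  by_contra hne
  have hpa : ¬ p ^ (k + 1) ∣ a := by
    rintro ⟨c, rfl⟩
    rw [mul_comm, map_mul, Module.End.mul_apply, hu, map_zero] at hne
    exact hne rfl
  obtain ⟨b, c, hbc⟩ := exists_mul_add_mul_eq_pow hp hpa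
  have hsocle : aeval X (p ^ k) u = aeval X b (aeval X a u) := by
    rw [← hbc, map_add, map_mul, map_mul, LinearMap.add_apply, Module.End.mul_apply,
      Module.End.mul_apply, hu, map_zero, add_zero]
  rw [hsocle, ← isSelfAdjoint_aeval hX] at huv
  exact huv (hxv _ (aeval_apply_mem_cyclicSubmodule b v))

lemma exists_minpoly_eq_pow_mul [FiniteDimensional F V] [Nontrivial V] (X : Module.End F V) :
    ∃ (p r : F[X]) (k : ℕ), Irreducible p ∧ ¬ p ∣ r ∧ minpoly F X = p ^ (k + 1) * r := by
  have hm0 : minpoly F X ≠ 0 := minpoly.ne_zero (Algebra.IsIntegral.isIntegral X)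
  obtain ⟨p, hp, hpm⟩ := WfDvdMonoid.exists_irreducible_factor (minpoly.not_isUnit F X) hm0
  obtain ⟨k, r, hpr, hm⟩ := WfDvdMonoid.max_power_factor hm0 hp
  obtain _ | k := k
  · rw [hm, pow_zero, one_mul] at hpm
    exact absurd hpm hpr
  · exact ⟨p, r, k, hp, hpr, hm⟩

lemma exists_cyclicSubmodule_pairing [FiniteDimensional F V] [Nontrivial V] (hf : f.IsRefl)
    (hnd : f.Nondegenerate) (hX : f.IsSelfAdjoint X) :
    ∃ u v : V, u ≠ 0 ∧ Disjoint (cyclicSubmodule X u) (f.orthogonal (cyclicSubmodule X v)) ∧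
      Disjoint (cyclicSubmodule X v) (f.orthogonal (cyclicSubmodule X u)) := by
  obtain ⟨p, r, k, hp, hpr, hm⟩ := exists_minpoly_eq_pow_mul X
  have hr0 : r ≠ 0 := by rintro rfl; exact hpr (dvd_zero p)
  have hne : aeval X (r * (p ^ k * r)) ≠ 0 := fun h0 ↦ by
    have hdvd := minpoly.dvd F X h0
    rw [hm, pow_succ, mul_assoc, mul_left_comm r, mul_dvd_mul_iff_left (pow_ne_zero k hp.ne_zero),
      mul_dvd_mul_iff_right hr0] at hdvd
    exact hpr hdvd
  obtain ⟨y, hy⟩ : ∃ y, aeval X (r * (p ^ k * r)) y ≠ 0 := by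
    by_contra! h
    exact hne (LinearMap.ext h)
  obtain ⟨w, hw⟩ : ∃ w, f w (aeval X (r * (p ^ k * r)) y) ≠ 0 := by
    by_contra! h
    exact hy (hnd.2 _ h)
  have hkill (x : V) : aeval X (p ^ (k + 1)) (aeval X r x) = 0 := by
    rw [← Module.End.mul_apply, ← map_mul, ← hm, minpoly.aeval, LinearMap.zero_apply]
  have hvu : f (aeval X r w) (aeval X (p ^ k) (aeval X r y)) ≠ 0 := by
    rwa [isSelfAdjoint_aeval hX, ← Module.End.mul_apply, ← map_mul, ← Module.End.mul_apply,
      ← map_mul, mul_assoc]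
  refine ⟨aeval X r y, aeval X r w, ?_, disjoint_cyclicSubmodule_orthogonal hX hp (hkill y) hvu,
    disjoint_cyclicSubmodule_orthogonal hX hp (hkill w) fun h0 ↦ hvu ?_⟩
  · intro hu
    simp [hu] at hvu
  · rw [← isSelfAdjoint_aeval hX]
    exact hf.eq_zero h0

theorem exists_isInvariantPolarization [FiniteDimensional F V] (hf : f.IsAlt)
    (hnd : f.Nondegenerate) (hX : (f ∘ₗ X).IsAlt) :
    ∃ W W' : Submodule F V, IsInvariantPolarization f X W W' := by
  induction hd : Module.finrank F V using Nat.strong_induction_on generalizing V with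
  | _ d ih =>
  rcases subsingleton_or_nontrivial V with hV | hV
  · exact ⟨⊥, ⊥, Module.End.invtSubmodule.bot_mem X, Module.End.invtSubmodule.bot_mem X, bot_le,
      bot_le, disjoint_bot_left, codisjoint_iff.2 (Subsingleton.elim _ _)⟩
  have hself := isSelfAdjoint_of_isAlt_comp hf hX
  obtain ⟨u, v, hu, huv, hvu⟩ := exists_cyclicSubmodule_pairing hf.isRefl hnd hself
  set A := cyclicSubmodule X u
  set B := cyclicSubmodule X v
  have hAX : A ∈ X.invtSubmodule := cyclicSubmodule_mem_invtSubmodule u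
  have hBX : B ∈ X.invtSubmodule := cyclicSubmodule_mem_invtSubmodule v
  have hA : A ≤ f.orthogonal A := cyclicSubmodule_le_orthogonal_self hf hX u
  have hB : B ≤ f.orthogonal B := cyclicSubmodule_le_orthogonal_self hf hX v
  set N := f.orthogonal (A ⊔ B) with hN
  have hdisj : Disjoint (A ⊔ B) N := disjoint_sup_orthogonal_sup hA hB huv hvu
  have hcompl : IsCompl (A ⊔ B) N :=
    (LinearMap.BilinForm.isCompl_orthogonal_iff_disjoint hf.isRefl).2 hdisj
  have hNX : N ∈ X.invtSubmodule :=
    orthogonal_mem_invtSubmodule hself (Module.End.invtSubmodule.sup_mem hAX hBX)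
  have hNnd : (f.restrict N).Nondegenerate := by
    refine f.nondegenerate_restrict_of_disjoint_orthogonal hf.isRefl ?_
    rw [hN, LinearMap.BilinForm.orthogonal_orthogonal hnd hf.isRefl]
    exact hdisj.symm
  have hlt : Module.finrank F N < d := hd ▸ Submodule.finrank_lt fun htop ↦ hu <|
    Submodule.disjoint_def.1 hdisj u (Submodule.mem_sup_left (self_mem_cyclicSubmodule u))
      (htop ▸ Submodule.mem_top)
  obtain ⟨W, W', hW⟩ := ih _ hlt (f := f.restrict N) (X := X.restrict hNX) (fun x ↦ hf x) hNnd
    (fun x ↦ hX x) rfl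
  exact ⟨_, _, hW.sup_map_subtype hf.isRefl hnd hAX hBX hA hB hcompl.codisjoint hNX⟩

lemma IsInvariantPolarization.exists_sqrt {W W' : Submodule F V}
    (h : IsInvariantPolarization f X W W') (hX : f.IsSelfAdjoint X) :
    ∃ z : Module.End F V, Commute z X ∧ ∀ x y, f (z x) (z y) = f (X x) y := by
  set z := LinearMap.ofIsCompl h.isCompl W.subtype (X ∘ₗ W'.subtype)
  have z_left : ∀ x ∈ W, z x = x := fun x hx ↦ LinearMap.ofIsCompl_apply_left h.isCompl ⟨x, hx⟩
  have z_right : ∀ x ∈ W', z x = X x :=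
    fun x hx ↦ LinearMap.ofIsCompl_apply_right h.isCompl ⟨x, hx⟩
  have exists_add (x : V) : ∃ w ∈ W, ∃ w' ∈ W', w + w' = x :=
    Submodule.mem_sup.1 (h.isCompl.sup_eq_top ▸ Submodule.mem_top)
  refine ⟨z, LinearMap.ext fun x ↦ ?_, fun x y ↦ ?_⟩
  · obtain ⟨a, ha, a', ha', rfl⟩ := exists_add x
    simp [z_left a ha, z_right a' ha', z_left _ (h.left_invariant ha),
      z_right _ (h.right_invariant ha')]
  · obtain ⟨a, ha, a', ha', rfl⟩ := exists_add x
    obtain ⟨b, hb, b', hb', rfl⟩ := exists_add y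
    have hab : f a b = 0 := h.left_isotropic hb a ha
    have hXb : f a (X b) = 0 := h.left_isotropic (h.left_invariant hb) a ha
    have hXab' : f (X a') b' = 0 := h.right_isotropic hb' _ (h.right_invariant ha')
    have hXXab' : f (X a') (X b') = 0 :=
      h.right_isotropic (h.right_invariant hb') _ (h.right_invariant ha')
    simp [z_left a ha, z_right a' ha', z_left b hb, z_right b' hb', hab, hXb, hXab', hXXab', hX a]

end HyperbolicDecomposition

section MatrixForms

variable {F R ι : Type*} [Field F] [CommRing R] [Fintype ι] [DecidableEq ι]

lemma toBilin'_apply_mulVec (h z : Matrix ι ι R) (x y : ι → R) :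
    toBilin' h (zᵀ *ᵥ x) (zᵀ *ᵥ y) = toBilin' (z * h * zᵀ) x y := by
  simp only [toBilin'_apply', dotProduct_mulVec, vecMul_vecMul, mulVec_transpose,
    ← mulVec_mulVec]

lemma isAlt_toBilin'_of_transpose_eq_neg [NoZeroDivisors R] (h2 : (2 : R) ≠ 0)
    {h : Matrix ι ι R} (hh : hᵀ = -h) : (toBilin' h).IsAlt := fun x ↦ by
  have hneg : x ⬝ᵥ h *ᵥ x = -(x ⬝ᵥ h *ᵥ x) := by
    conv_lhs => rw [dotProduct_mulVec, ← mulVec_transpose, hh, neg_mulVec, neg_dotProduct,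
      dotProduct_comm]
  have : (2 : R) * (x ⬝ᵥ h *ᵥ x) = 0 := by linear_combination hneg
  simpa [toBilin'_apply', h2] using this

lemma transpose_eq_neg_of_isAlt_toBilin' {h : Matrix ι ι R} (hh : (toBilin' h).IsAlt) :
    hᵀ = -h := by
  ext i j
  simpa using (hh.neg_eq (Pi.single i 1) (Pi.single j 1)).symm

lemma exists_mul_mul_transpose_eq {h M : Matrix ι ι F} (hdet : IsUnit h.det)
    (hh : (toBilin' h).IsAlt) (hM : (toBilin' M).IsAlt) :
    ∃ z : Matrix ι ι F, z * h * zᵀ = M ∧ Commute z (M * h⁻¹) := by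
  have hnd : (toBilin' h).Nondegenerate :=
    LinearMap.BilinForm.nondegenerate_toBilin'_iff_det_ne_zero.2 hdet.ne_zero
  have hcomp (x y : ι → F) : toBilin' h (toLin' (M * h⁻¹)ᵀ x) y = toBilin' M x y := by
    rw [toBilin'_apply', toBilin'_apply', toLin'_apply, mulVec_transpose, ← dotProduct_mulVec,
      mulVec_mulVec, nonsing_inv_mul_cancel_right _ _ hdet]
  have hX : (toBilin' h ∘ₗ toLin' (M * h⁻¹)ᵀ).IsAlt := fun x ↦ (hcomp x x).trans (hM x)
  obtain ⟨W, W', hW⟩ := exists_isInvariantPolarization hh hnd hX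
  obtain ⟨z, hzX, hz⟩ := hW.exists_sqrt (isSelfAdjoint_of_isAlt_comp hh hX)
  obtain ⟨w, rfl⟩ := toLin'.surjective z
  refine ⟨wᵀ, toBilin'.injective (LinearMap.ext₂ fun x y ↦ ?_), ?_⟩
  · rw [← toBilin'_apply_mulVec, transpose_transpose, ← hcomp x y, ← hz, toLin'_apply,
      toLin'_apply]
  · rw [Commute, SemiconjBy, Module.End.mul_eq_comp, Module.End.mul_eq_comp, ← toLin'_mul,
      ← toLin'_mul] at hzX
    simpa [Commute, SemiconjBy] using (congr_arg transpose (toLin'.injective hzX)).symm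

end MatrixForms

section HeckeOperator

variable {k G V : Type*} [CommRing k] [Group G] [AddCommGroup V] [Module k V]

lemma map_mem_of_mem_doubleCoset {H : Subgroup G} {σ : G → G}
    (hσ : ∀ g, σ g ∈ DoubleCoset.doubleCoset g⁻¹ H H) {x : G} (hx : x ∈ H) : σ x ∈ H := by
  obtain ⟨y, hy, z, hz, e⟩ := DoubleCoset.mem_doubleCoset.1 (hσ x)
  rw [e]
  exact H.mul_mem (H.mul_mem hy (H.inv_mem hx)) hz

variable (ρ : Representation k G V) (H : Subgroup G) [Fintype H]
  [Invertible (Fintype.card H : k)]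

/-- Averaging over the subgroup `H`, as a projection of a representation of `G` onto its
`H`-invariants. -/
noncomputable def averageProj : V →ₗ[k] Representation.invariants (ρ.comp H.subtype) :=
  LinearMap.codRestrict _ (Representation.averageMap (ρ.comp H.subtype))
    (Representation.averageMap_invariant _)

/-- The Hecke operator of `g` on the `H`-invariants of a representation: act by `g`, then average
over `H`. Up to a scalar, this is the action on the invariants of the characteristic function of
the double coset `H g H`. -/
noncomputable def heckeOperator (g : G) :
    Module.End k (Representation.invariants (ρ.comp H.subtype)) :=
  averageProj ρ H ∘ₗ ρ g ∘ₗ Submodule.subtype _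

variable {ρ H}

lemma coe_averageProj_apply (v : V) :
    (averageProj ρ H v : V) = ⅟(Fintype.card H : k) • ∑ x : H, ρ x v := by
  simp [averageProj, GroupAlgebra.average]

lemma averageProj_coe (v : Representation.invariants (ρ.comp H.subtype)) :
    averageProj ρ H v = v :=
  Subtype.ext (Representation.averageMap_id (ρ.comp H.subtype) v v.2)

lemma averageProj_apply_of_mem {x : G} (hx : x ∈ H) (v : V) :
    averageProj ρ H (ρ x v) = averageProj ρ H v := by
  ext
  rw [coe_averageProj_apply, coe_averageProj_apply,
    ← Equiv.sum_comp (Equiv.mulRight (⟨x, hx⟩ : H)) fun y : H ↦ ρ y v]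
  simp

lemma heckeOperator_apply (g : G) (v : Representation.invariants (ρ.comp H.subtype)) :
    heckeOperator ρ H g v = averageProj ρ H (ρ g v) :=
  rfl

lemma heckeOperator_eq_of_mem_doubleCoset {a b : G} (hab : b ∈ DoubleCoset.doubleCoset a H H) :
    heckeOperator ρ H b = heckeOperator ρ H a := by
  obtain ⟨x, hx, y, hy, rfl⟩ := DoubleCoset.mem_doubleCoset.1 hab
  refine LinearMap.ext fun v ↦ ?_
  have hyv : ρ y v = v := v.2 ⟨y, hy⟩
  simp only [heckeOperator_apply, map_mul, Module.End.mul_apply, hyv, averageProj_apply_of_mem hx]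

lemma heckeOperator_mul (a b : G) :
    heckeOperator ρ H a * heckeOperator ρ H b =
      ⅟(Fintype.card H : k) • ∑ x : H, heckeOperator ρ H (a * x * b) := by
  refine LinearMap.ext fun v ↦ ?_
  simp only [Module.End.mul_apply, heckeOperator_apply, coe_averageProj_apply,
    LinearMap.smul_apply, LinearMap.sum_apply, map_smul, map_sum, map_mul]

lemma heckeOperator_map_inv {σ : G → G} (hσ : ∀ g, σ g ∈ DoubleCoset.doubleCoset g⁻¹ H H)
    (g : G) : heckeOperator ρ H (σ g)⁻¹ = heckeOperator ρ H g := by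
  obtain ⟨x, hx, y, hy, e⟩ := DoubleCoset.mem_doubleCoset.1 (hσ g)
  refine heckeOperator_eq_of_mem_doubleCoset (DoubleCoset.mem_doubleCoset.2
    ⟨y⁻¹, H.inv_mem hy, x⁻¹, H.inv_mem hx, ?_⟩)
  rw [e]
  group

/- Gelfand's trick: the anti-automorphism `g ↦ (σ g)⁻¹` fixes every Hecke operator and reverses
their products. -/
lemma commute_heckeOperator {σ : G ≃* G} (hσ : ∀ g, σ g ∈ DoubleCoset.doubleCoset g⁻¹ H H)
    (a b : G) : Commute (heckeOperator ρ H a) (heckeOperator ρ H b) := by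
  let e : H → H := fun x ↦ ⟨(σ x)⁻¹, H.inv_mem (map_mem_of_mem_doubleCoset hσ x.2)⟩
  have he : Function.Bijective e := Finite.injective_iff_bijective.1 fun x y hxy ↦ by
    simpa [e] using hxy
  have hsum : ∑ x : H, heckeOperator ρ H (a * x * b) =
      ∑ x : H, heckeOperator ρ H ((σ b)⁻¹ * x * (σ a)⁻¹) :=
    Fintype.sum_bijective e he _ _ fun x ↦ by
      rw [← heckeOperator_map_inv hσ (a * x * b), map_mul, map_mul, _root_.mul_inv_rev,
        _root_.mul_inv_rev, mul_assoc]
  calc heckeOperator ρ H a * heckeOperator ρ H b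
      = heckeOperator ρ H (σ b)⁻¹ * heckeOperator ρ H (σ a)⁻¹ := by
        rw [heckeOperator_mul, hsum, ← heckeOperator_mul]
    _ = heckeOperator ρ H b * heckeOperator ρ H a := by
        rw [heckeOperator_map_inv hσ, heckeOperator_map_inv hσ]

end HeckeOperator

section GelfandTrick

variable {k G V : Type*} [Field k] [Group G] [AddCommGroup V] [Module k V]

lemma finrank_le_one_of_commute [IsAlgClosed k] [FiniteDimensional k V] {ι : Type*}
    (T : ι → Module.End k V) (hcomm : ∀ i j, Commute (T i) (T j))
    (hspan : ∀ v ≠ 0, Submodule.span k (Set.range fun i ↦ T i v) = ⊤) :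
    Module.finrank k V ≤ 1 := by
  rcases subsingleton_or_nontrivial V with hV | hV
  · simp [Module.finrank_zero_of_subsingleton]
  let A := Algebra.adjoin k (Set.range T)
  have hA : IsMulCommutative A := Algebra.isMulCommutative_adjoin k <| by
    rintro _ ⟨i, rfl⟩ _ ⟨j, rfl⟩
    exact hcomm i j
  have hsimple : IsSimpleModule A V := by
    refine isSimpleModule_iff_toSpanSingleton_surjective.2 ⟨hV, fun v hv w ↦ ?_⟩
    have hle : Submodule.span k (Set.range fun i ↦ T i v) ≤
        LinearMap.range ((LinearMap.toSpanSingleton A V v).restrictScalars k) := by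
      rw [Submodule.span_le]
      rintro _ ⟨i, rfl⟩
      exact ⟨⟨T i, Algebra.subset_adjoin ⟨i, rfl⟩⟩, rfl⟩
    exact hle (hspan v hv ▸ Submodule.mem_top)
  exact (IsSimpleModule.finrank_eq_one_of_isMulCommutative (k := k) (A := A) (V := V)).le

lemma span_range_apply_eq_top {ρ : Representation k G V} (hρ : ρ.IsIrreducible) {v : V}
    (hv : v ≠ 0) : Submodule.span k (Set.range fun g ↦ ρ g v) = ⊤ := by
  let S : Subrepresentation ρ :=
    { toSubmodule := Submodule.span k (Set.range fun g ↦ ρ g v)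
      apply_mem_toSubmodule := fun g w hw ↦ by
        refine Submodule.span_le (p := Submodule.comap (ρ g) (Submodule.span k _)).2 ?_ hw
        rintro _ ⟨g', rfl⟩
        exact Submodule.subset_span ⟨g * g', by simp⟩ }
  have hvS : v ∈ S := Submodule.subset_span ⟨1, by simp⟩
  rcases hρ.eq_bot_or_eq_top S with hS | hS
  · rw [hS] at hvS
    exact absurd hvS hv
  · exact congr_arg Subrepresentation.toSubmodule hS

lemma span_range_heckeOperator_eq_top {ρ : Representation k G V} {H : Subgroup G} [Fintype H]
    [Invertible (Fintype.card H : k)] (hρ : ρ.IsIrreducible)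
    {v : Representation.invariants (ρ.comp H.subtype)} (hv : v ≠ 0) :
    Submodule.span k (Set.range fun g ↦ heckeOperator ρ H g v) = ⊤ := by
  have hv' : (v : V) ≠ 0 := by simpa using hv
  have hsurj : LinearMap.range (averageProj ρ H) = ⊤ :=
    LinearMap.range_eq_top.2 fun w ↦ ⟨w, averageProj_coe w⟩
  rw [← hsurj, LinearMap.range_eq_map, ← span_range_apply_eq_top hρ hv', Submodule.map_span,
    ← Set.range_comp]
  rfl

theorem finrank_invariants_le_one [IsAlgClosed k] [FiniteDimensional k V]
    {ρ : Representation k G V} {H : Subgroup G} (hH : (Nat.card H : k) ≠ 0)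
    {σ : G ≃* G} (hσ : ∀ g, σ g ∈ DoubleCoset.doubleCoset g⁻¹ H H) (hρ : ρ.IsIrreducible) :
    Module.finrank k (Representation.invariants (ρ.comp H.subtype)) ≤ 1 := by
  have : Finite H := Nat.finite_of_card_ne_zero fun h0 ↦ hH (by rw [h0, Nat.cast_zero])
  let := Fintype.ofFinite H
  let : Invertible (Fintype.card H : k) := invertibleOfNonzero (by rwa [Fintype.card_eq_nat_card])
  exact finrank_le_one_of_commute (heckeOperator ρ H) (commute_heckeOperator hσ)
    fun v ↦ span_range_heckeOperator_eq_top hρ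

end GelfandTrick

section IsometryInvolution

/- With `τ g = (σ g)⁻¹`, the factors are `k = g⁻¹ z` and `k' = τ(g) z⁻¹`: both are fixed by `σ`, and
`τ(g) = k g k'`. -/
lemma apply_mem_doubleCoset_inv {G : Type*} [Group G] {σ : G ≃* G} (hσ : Function.Involutive σ)
    {H : Subgroup G} (hH : ∀ x, σ x = x → x ∈ H) {g z : G}
    (hz : z * (σ z)⁻¹ = g * (σ g)⁻¹) (hcomm : Commute z (g * (σ g)⁻¹)) :
    σ g ∈ DoubleCoset.doubleCoset g⁻¹ H H := by
  have hσz : σ z = σ g * g⁻¹ * z := by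
    rw [mul_inv_eq_iff_eq_mul, ← inv_mul_eq_iff_eq_mul, _root_.mul_inv_rev,
      inv_inv] at hz
    exact hz.symm
  have hcomm' : z * g * (σ g)⁻¹ * z⁻¹ = g * (σ g)⁻¹ := by
    rw [mul_inv_eq_iff_eq_mul, mul_assoc, hcomm.eq]
  have hk : g⁻¹ * z ∈ H := hH _ (by rw [map_mul, map_inv, hσz]; group)
  have hk' : (σ g)⁻¹ * z⁻¹ ∈ H := hH _ <| by
    calc σ ((σ g)⁻¹ * z⁻¹) = g⁻¹ * (z⁻¹ * (g * (σ g)⁻¹)) := by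
          rw [map_mul, map_inv, map_inv, hσ g, hσz]; group
      _ = (σ g)⁻¹ * z⁻¹ := by rw [(hcomm.inv_left).eq]; group
  refine DoubleCoset.mem_doubleCoset.2 ⟨_, H.inv_mem hk', _, H.inv_mem hk, ?_⟩
  calc σ g = (g⁻¹ * (g * (σ g)⁻¹))⁻¹ := by group
    _ = ((σ g)⁻¹ * z⁻¹)⁻¹ * g⁻¹ * (g⁻¹ * z)⁻¹ := by rw [← hcomm']; group

variable {ι R : Type*} [Fintype ι] [DecidableEq ι] [CommRing R]

/-- The inverse transpose automorphism `g ↦ (gᵗ)⁻¹` of the general linear group. -/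
def contragredient : GL ι R ≃* GL ι R :=
  ((Units.mapEquiv (transposeRingEquiv ι R).toMulEquiv).trans Units.opEquiv).trans
    (MulEquiv.inv' (GL ι R)).symm

lemma coe_contragredient (g : GL ι R) :
    (contragredient g : Matrix ι ι R) = (g : Matrix ι ι R)ᵀ⁻¹ := by
  simp [contragredient]

lemma contragredient_contragredient (g : GL ι R) : contragredient (contragredient g) = g := by
  ext1
  rw [coe_contragredient, coe_contragredient, transpose_nonsing_inv, transpose_transpose,
    nonsing_inv_nonsing_inv _ (isUnits_det_units g)]

/-- The automorphism `g ↦ h (gᵗ)⁻¹ h⁻¹` of the general linear group, whose fixed points are the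
isometries of the bilinear form with matrix `h`. -/
def isometryInvolution (h : GL ι R) : GL ι R ≃* GL ι R :=
  contragredient.trans (MulAut.conj h)

lemma isometryInvolution_apply (h g : GL ι R) :
    isometryInvolution h g = h * contragredient g * h⁻¹ :=
  rfl

lemma coe_mul_inv_isometryInvolution (h g : GL ι R) :
    ((g * (isometryInvolution h g)⁻¹ : GL ι R) : Matrix ι ι R) =
      g * h * (g : Matrix ι ι R)ᵀ * (h : Matrix ι ι R)⁻¹ := by
  have hg : (g : Matrix ι ι R)ᵀ⁻¹⁻¹ = (g : Matrix ι ι R)ᵀ :=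
    nonsing_inv_nonsing_inv _ (isUnit_det_transpose _ (isUnits_det_units g))
  simp [isometryInvolution_apply, coe_contragredient, mul_assoc, hg]

lemma isometryInvolution_eq_self_iff {h g : GL ι R} :
    isometryInvolution h g = g ↔ (g : Matrix ι ι R) * h * (g : Matrix ι ι R)ᵀ = h := by
  rw [eq_comm, ← mul_inv_eq_one, Units.ext_iff, coe_mul_inv_isometryInvolution, Units.val_one,
    mul_inv_eq_iff_eq_mul_of_invertible, one_mul]

lemma isometryInvolution_involutive {h : GL ι R}
    (hh : (h : Matrix ι ι R)ᵀ = -(h : Matrix ι ι R)) :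
    Function.Involutive (isometryInvolution h) := by
  intro g
  have hc : contragredient h = (-h)⁻¹ := by
    ext1
    rw [coe_contragredient, hh, coe_units_inv, Units.val_neg]
  rw [isometryInvolution_apply, isometryInvolution_apply, map_mul, map_mul, map_inv,
    contragredient_contragredient, hc]
  simp [mul_assoc]

variable {F : Type} [Field F]

theorem isometryInvolution_mem_doubleCoset {n : ℕ} {h : GL (Fin n) F}
    (hh : (toBilin' (h : Matrix (Fin n) (Fin n) F)).IsAlt) (g : GL (Fin n) F) :
    isometryInvolution h g ∈ DoubleCoset.doubleCoset g⁻¹ (Isom (h : Matrix (Fin n) (Fin n) F))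
      (Isom (h : Matrix (Fin n) (Fin n) F)) := by
  have hM : (toBilin' (g.val * h.val * g.valᵀ)).IsAlt :=
    fun x ↦ by rw [← toBilin'_apply_mulVec]; exact hh _
  obtain ⟨z, hz, hcomm⟩ := exists_mul_mul_transpose_eq (isUnits_det_units h) hh hM
  have hzu : IsUnit z := by
    have hu : IsUnit (z.det * (h.val * zᵀ).det) := by
      rw [← det_mul, ← mul_assoc, hz, det_mul, det_mul, det_transpose]
      exact ((isUnits_det_units g).mul (isUnits_det_units h)).mul (isUnits_det_units g)
    exact (isUnit_iff_isUnit_det z).2 (isUnit_of_mul_isUnit_left hu)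
  obtain ⟨z, rfl⟩ := hzu
  refine apply_mem_doubleCoset_inv
    (isometryInvolution_involutive (transpose_eq_neg_of_isAlt_toBilin' hh))
    (fun x hx ↦ isometryInvolution_eq_self_iff.1 hx) (z := z) (Units.ext ?_) (Units.ext ?_)
  · rw [coe_mul_inv_isometryInvolution, coe_mul_inv_isometryInvolution, hz]
  · rw [Units.val_mul z, Units.val_mul _ z, coe_mul_inv_isometryInvolution]
    exact hcomm

end IsometryInvolution

section Characters

open scoped Classical in
lemma innerProd_ind {G : Type*} [Group G] [Fintype G] (H : Subgroup G) {χ : G → ℂ}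
    (hχ : ∀ x y, χ (y * x * y⁻¹) = χ x) (φ : G → ℂ) :
    innerProd χ (ind H φ) = (Nat.card H : ℂ)⁻¹ * ∑ x : H, χ x * starRingEnd ℂ (φ x) := by
  have hconj : ∀ y, ∑ x, χ x * starRingEnd ℂ (if y⁻¹ * x * y ∈ H then φ (y⁻¹ * x * y) else 0) =
      ∑ x : H, χ x * starRingEnd ℂ (φ x) := fun y ↦ by
    have hcancel (x : G) : y⁻¹ * (y * x * y⁻¹) * y = x := by group
    rw [← Equiv.sum_comp (MulAut.conj y).toEquiv]
    simp only [MulEquiv.toEquiv_eq_coe, EquivLike.coe_coe, MulAut.conj_apply, hχ, hcancel,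
      apply_ite (starRingEnd ℂ), map_zero, mul_ite, mul_zero]
    rw [← Finset.sum_filter]
    exact Finset.sum_subtype _ (by simp) _
  have hG : (Nat.card G : ℂ) ≠ 0 := Nat.cast_ne_zero.2 Nat.card_pos.ne'
  calc innerProd χ (ind H φ)
      = (Nat.card G : ℂ)⁻¹ * ((Nat.card H : ℂ)⁻¹ * ∑ y : G, ∑ x,
          χ x * starRingEnd ℂ (if y⁻¹ * x * y ∈ H then φ (y⁻¹ * x * y) else 0)) := by
        simp only [innerProd, ind, map_mul, map_inv₀, map_natCast, map_sum, Finset.mul_sum,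
          mul_left_comm (χ _)]
        rw [Finset.sum_comm]
    _ = (Nat.card H : ℂ)⁻¹ * ∑ x : H, χ x * starRingEnd ℂ (φ x) := by
        simp only [hconj, Finset.sum_const, Finset.card_univ, ← Nat.card_eq_fintype_card,
          nsmul_eq_mul]
        field_simp

lemma innerProd_character_ind_one {G : Type*} [Group G] [Fintype G] (H : Subgroup G)
    (V : FDRep ℂ G) :
    innerProd V.character (ind H fun _ ↦ 1) =
      Module.finrank ℂ (Representation.invariants (MonoidHom.comp V.ρ H.subtype)) := by
  classical
  let : Invertible (Nat.card H : ℂ) := invertibleOfNonzero (Nat.cast_ne_zero.2 Nat.card_pos.ne')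
  rw [innerProd_ind H V.char_conj, ← Representation.card_inv_mul_sum_char_eq_finrank]
  simp only [map_one, mul_one]
  rfl

variable {k G : Type*} [Field k] [Monoid G]

lemma isIrreducible_of_simple (V : FDRep k G) [CategoryTheory.Simple V] :
    Representation.IsIrreducible V.ρ where
  exists_pair_ne := by
    refine ⟨⊥, ⊤, fun h ↦ CategoryTheory.id_nonzero V ?_⟩
    ext x
    exact (h ▸ trivial : x ∈ (⊥ : Subrepresentation V.ρ))
  eq_bot_or_eq_top S := by
    let i : FDRep.of S.toRepresentation ⟶ V :=
      ⟨CategoryTheory.InducedCategory.homMk (ModuleCat.ofHom S.toSubmodule.subtype),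
        fun g ↦ by ext x; rfl⟩
    have hi : CategoryTheory.Mono i :=
      CategoryTheory.ConcreteCategory.mono_of_injective i Subtype.val_injective
    by_cases h0 : i = 0
    · refine Or.inl (SetLike.ext fun x ↦ ⟨fun hx ↦ ?_, fun hx ↦ hx ▸ S.toSubmodule.zero_mem⟩)
      exact congr_arg (fun j : FDRep.of S.toRepresentation ⟶ V ↦ j.hom.hom.hom ⟨x, hx⟩) h0
    · have := CategoryTheory.isIso_of_mono_of_nonzero h0
      refine Or.inr (SetLike.ext fun x ↦ ⟨fun _ ↦ trivial, fun _ ↦ ?_⟩)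
      let e := FDRep.isoToLinearEquiv (CategoryTheory.asIso i)
      rw [← e.apply_symm_apply x]
      exact (e.symm x : S.toSubmodule).2

lemma isIrreducible_comp_of_surjective {V G' : Type*} [AddCommGroup V] [Module k V] [Monoid G']
    {ρ : Representation k G V} (hρ : ρ.IsIrreducible) {π : G' →* G} (hπ : Function.Surjective π) :
    Representation.IsIrreducible (ρ.comp π) := by
  let e : Subrepresentation (ρ.comp π) ≃o Subrepresentation ρ :=
    { toFun := fun S ↦ ⟨S.toSubmodule, fun g ↦ by
        obtain ⟨g', rfl⟩ := hπ g
        exact S.apply_mem_toSubmodule g'⟩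
      invFun := fun S ↦ ⟨S.toSubmodule, fun g ↦ S.apply_mem_toSubmodule (π g)⟩
      left_inv := fun _ ↦ rfl
      right_inv := fun _ ↦ rfl
      map_rel_iff' := Iff.rfl }
  exact e.isSimpleOrder_iff.2 hρ

end Characters

open scoped ComplexOrder in
theorem pgsp_induced_multiplicity_free_general {F : Type} [Field F] [Fintype F] {n : ℕ}
    {h : GL (Fin n) F} (hh : (toBilin' (h : Matrix (Fin n) (Fin n) F)).IsAlt)
    {K : Subgroup (PGL n F)} (hK : (Isom (h : Matrix (Fin n) (Fin n) F)).map (pgl n F) ≤ K)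
    (V : FDRep ℂ (PGL n F)) [CategoryTheory.Simple V] :
    innerProd V.character (ind K fun _ ↦ 1) ≤ 1 := by
  have hirr := isIrreducible_comp_of_surjective (isIrreducible_of_simple V)
    (QuotientGroup.mk'_surjective (scalarSub n F))
  have hle : Representation.invariants (MonoidHom.comp V.ρ K.subtype) ≤
      Representation.invariants (MonoidHom.comp (MonoidHom.comp V.ρ (pgl n F))
        (Isom (h : Matrix (Fin n) (Fin n) F)).subtype) :=
    fun v hv x ↦ hv ⟨pgl n F x, hK (Subgroup.mem_map_of_mem _ x.2)⟩
  rw [innerProd_character_ind_one]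
  exact_mod_cast (Submodule.finrank_mono hle).trans <|
    finrank_invariants_le_one (Nat.cast_ne_zero.2 Nat.card_pos.ne')
      (isometryInvolution_mem_doubleCoset hh) hirr

open scoped ComplexOrder in
/-- Let `q` be an odd prime power, `n ≥ 2` even, `h ∈ GL_n(F_q)`
skew-symmetric.  With `S(h)` the stabilizer `PGSp_n(F_q)` in `PGL_n(F_q)`, the induced
character `Ind_{S(h)}^{PGL_n(F_q)}(1)` is multiplicity-free: for every irreducible complex
character `χ` of `PGL_n(F_q)`, `⟨χ, Ind_{S(h)}(1)⟩ ≤ 1`. -/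
theorem pgsp_induced_multiplicity_free
    (F : Type) [Field F] [Fintype F] (hodd : Odd (Fintype.card F))
    (n : ℕ) (hn2 : 2 ≤ n) (hneven : Even n) (h : GL (Fin n) F)
    (hskew : (↑h : Matrix (Fin n) (Fin n) F)ᵀ = -(↑h : Matrix (Fin n) (Fin n) F))
    (χ : PGL n F → ℂ)
    (hχ : ∃ V : FDRep ℂ (PGL n F), CategoryTheory.Simple V ∧ χ = V.character) :
    innerProd χ
        (ind ((Sim (↑h : Matrix (Fin n) (Fin n) F)).map (pgl n F)) (fun _ => 1)) ≤ 1 := by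
  obtain ⟨V, hV, rfl⟩ := hχ
  have h2 : (2 : F) ≠ 0 := Ring.two_ne_zero fun hchar ↦
    Nat.not_even_iff_odd.2 hodd (Nat.even_iff.2 (FiniteField.even_card_of_char_two hchar))
  have hle : Isom (h : Matrix (Fin n) (Fin n) F) ≤ Sim (h : Matrix (Fin n) (Fin n) F) :=
    fun g hg ↦ ⟨1, by rw [Units.val_one, one_smul]; exact hg⟩
  exact pgsp_induced_multiplicity_free_general (isAlt_toBilin'_of_transpose_eq_neg h2 hskew)
    (Subgroup.map_mono hle) V
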